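/- Let Δ^{K−1} be the probability simplex in ℝ^K, and let ℓ : ℝ^K → ℝ be twice continuously differentiable on an open convex neighborhood U of Δ^{K−1}, with Hessian H_ℓ satisfying ‖H_ℓ(q)‖_op ≤ M for all q ∈ U and ‖H_ℓ(u) − H_ℓ(v)‖_op ≤ G‖u − v‖₂ for all u, v ∈ U, for some constants M, G ≥ 0. Let α ∈ ℝ_{>0}^K, α₀ = Σ_{j=1}^K α_j, p = α/α₀, and let π be a Dirichlet(α)-distributed random vector. Then 𝔼[ℓ(π)] = ℓ(p) + L₁(p)/(α₀ + 1) + R(α), where L₁(p) = (1/2) tr(H_ℓ(p)(Diag(p) − p pᵀ)) satisfies |L₁(p)| ≤ (1/2)(1 − 1/K)M and the remainder satisfies |R(α)| ≤ G/(3(α₀ + 1)). In particular, |𝔼[ℓ(π)] − ℓ(p)| ≤ ((1/2)(1 − 1/K)M + G/3)/(α₀ + 1), so the Dirichlet-expected loss equals the plug-in loss ℓ(p) up to an error of order O((α₀ + 1)⁻¹). -/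

import Mathlib

open MeasureTheory ProbabilityTheory
open scoped RealInnerProductSpace

/-- The probability simplex `Δ^{K−1} ⊆ ℝ^K`. -/
def probSimplex (K : ℕ) : Set (EuclideanSpace ℝ (Fin K)) :=
  {q | (∀ i, 0 ≤ q i) ∧ ∑ i, q i = 1}

/-! Expand `ℓ` to second order at the mean `p`, with a remainder of at most `G/6 ‖q - p‖³` because
the Hessian is `G`-Lipschitz. Under the Dirichlet law the linear term integrates to zero, the
quadratic term is exactly `L₁(p)/(α₀ + 1)` because the covariance matrix is
`(Diag p - p pᵀ)/(α₀ + 1)`, and the remainder is at most `G/3 · 𝔼‖π - p‖²` because the simplex has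
diameter at most `2`. Both this bound and the one on `L₁(p)` then follow from
`𝔼‖π - p‖² = (1 - ‖p‖²)/(α₀ + 1)`.

The Dirichlet moments come from `x⁻ˢ = Γ(s)⁻¹ ∫₀^∞ tˢ⁻¹ e^{-tx} dt`, applied to the normalising sum
of the Gamma variables: for fixed `t` the integrand factors over the independent coordinates. What
is left is an integral in `t` depending only on the total shape `α₀`, and it is evaluated by
reading the same formula backwards for a single Gamma variable of shape `α₀`. -/

section Taylor

variable {E F : Type*} [NormedAddCommGroup E] [NormedSpace ℝ E] [NormedAddCommGroup F]
  [NormedSpace ℝ F] {s : Set E} {p x : E}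

lemma norm_sub_le_of_norm_fderivWithin_lineMap_le {f : E → F} {f' : E → E →L[ℝ] F}
    (hs : StarConvex ℝ p s) (hx : x ∈ s) (hf : ∀ y ∈ s, HasFDerivWithinAt f (f' y) s y)
    {C : ℝ} {n : ℕ}
    (hC : ∀ t ∈ Set.Icc (0 : ℝ) 1, ‖f' (AffineMap.lineMap p x t) (x - p)‖ ≤ C * t ^ n) :
    ‖f x - f p‖ ≤ C / (n + 1) := by
  have hmaps : Set.MapsTo (AffineMap.lineMap p x) (Set.Icc (0 : ℝ) 1) s :=
    fun t ht => hs.segment_subset hx (lineMap_mem_segment ℝ p x ht)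
  have hderiv (t : ℝ) (ht : t ∈ Set.Icc (0 : ℝ) 1) :
      HasDerivWithinAt (fun t => f (AffineMap.lineMap p x t) - f p)
        (f' (AffineMap.lineMap p x t) (x - p)) (Set.Icc 0 1) t :=
    ((hf _ (hmaps ht)).comp_hasDerivWithinAt t AffineMap.hasDerivWithinAt_lineMap hmaps).sub_const _
  have hB (t : ℝ) : HasDerivAt (fun t : ℝ => C / (n + 1) * t ^ (n + 1)) (C * t ^ n) t := by
    refine ((hasDerivAt_pow (n + 1) t).const_mul _).congr_deriv ?_
    push_cast
    field_simp
  have := image_norm_le_of_norm_deriv_right_le_deriv_boundary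
    (fun t ht => (hderiv t ht).continuousWithinAt)
    (fun t ht => (hderiv t (Set.Ico_subset_Icc_self ht)).mono_of_mem_nhdsWithin
      (Icc_mem_nhdsGE_of_mem ht))
    (by simp) hB (fun t ht => hC t (Set.Ico_subset_Icc_self ht))
    (Set.right_mem_Icc.2 zero_le_one)
  simpa using this

lemma norm_sub_taylor_one_le {f : E → F} {f' : E → E →L[ℝ] F} {G : ℝ}
    (hs : StarConvex ℝ p s) (hx : x ∈ s) (hf : ∀ y ∈ s, HasFDerivWithinAt f (f' y) s y)
    (hlip : ∀ y ∈ s, ‖f' y - f' p‖ ≤ G * ‖y - p‖) :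
    ‖f x - f p - f' p (x - p)‖ ≤ G / 2 * ‖x - p‖ ^ 2 := by
  have hg (y) (hy : y ∈ s) :
      HasFDerivWithinAt (fun y => f y - f' p (y - p)) (f' y - f' p) s y :=
    (hf y hy).sub ((f' p).hasFDerivAt.comp y ((hasFDerivAt_id y).sub_const p)).hasFDerivWithinAt
  have := norm_sub_le_of_norm_fderivWithin_lineMap_le (n := 1) (C := G * ‖x - p‖ ^ 2)
    hs hx hg ?_
  · convert this using 1
    · simp [sub_right_comm]
    · push_cast; ring
  intro t ht
  have hmem : AffineMap.lineMap p x t ∈ s :=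
    hs.segment_subset hx (lineMap_mem_segment ℝ p x ht)
  have hline : AffineMap.lineMap p x t - p = t • (x - p) :=
    AffineMap.lineMap_vsub_left p x t
  calc ‖(f' (AffineMap.lineMap p x t) - f' p) (x - p)‖
      ≤ G * ‖AffineMap.lineMap p x t - p‖ * ‖x - p‖ :=
        ContinuousLinearMap.le_of_opNorm_le _ (hlip _ hmem) _
    _ = G * ‖x - p‖ ^ 2 * t ^ 1 := by
        rw [hline, norm_smul, Real.norm_of_nonneg ht.1]
        ring

lemma norm_sub_taylor_two_le {f : E → F} {f' : E → E →L[ℝ] F} {f'' : E → E →L[ℝ] E →L[ℝ] F}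
    {G : ℝ} (hs : StarConvex ℝ p s) (hx : x ∈ s)
    (hf : ∀ y ∈ s, HasFDerivWithinAt f (f' y) s y)
    (hf' : ∀ y ∈ s, HasFDerivWithinAt f' (f'' y) s y)
    (hlip : ∀ y ∈ s, ‖f'' y - f'' p‖ ≤ G * ‖y - p‖) :
    ‖f x - f p - f' p (x - p) - (1 / 2 : ℝ) • f'' p (x - p) (x - p)‖ ≤ G / 6 * ‖x - p‖ ^ 3 := by
  have hsub (y : E) : HasFDerivAt (fun y => y - p) (.id ℝ E) y := (hasFDerivAt_id y).sub_const p
  have hg (y) (hy : y ∈ s) := ((hf y hy).sub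
    ((f' p).hasFDerivAt.comp y (hsub y)).hasFDerivWithinAt).sub
      ((((f'' p).hasFDerivAt.comp y (hsub y)).clm_apply (hsub y)).const_smul
        (1 / 2 : ℝ)).hasFDerivWithinAt
  have := norm_sub_le_of_norm_fderivWithin_lineMap_le (n := 2) (C := G / 2 * ‖x - p‖ ^ 3)
    hs hx hg ?_
  · convert this using 1
    · simp [sub_right_comm]
    · push_cast; ring
  intro t ht
  have hmem : AffineMap.lineMap p x t ∈ s :=
    hs.segment_subset hx (lineMap_mem_segment ℝ p x ht)
  have hline : AffineMap.lineMap p x t - p = t • (x - p) :=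
    AffineMap.lineMap_vsub_left p x t
  set y := AffineMap.lineMap p x t
  calc _ = ‖(f' y - f' p - f'' p (y - p)) (x - p)‖ := by
        congr 1
        simp only [ContinuousLinearMap.comp_id, one_div, Function.comp_apply, hline, map_smul,
          map_sub, smul_add, sub_apply, add_apply, smul_apply, ContinuousLinearMap.flip_apply]
        module
    _ ≤ G / 2 * ‖y - p‖ ^ 2 * ‖x - p‖ :=
        ContinuousLinearMap.le_of_opNorm_le _ (norm_sub_taylor_one_le hs hmem hf' hlip) _
    _ = G / 2 * ‖x - p‖ ^ 3 * t ^ 2 := by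
        rw [hline, norm_smul, Real.norm_of_nonneg ht.1]
        ring

end Taylor

section Expectation

variable {Ω : Type*} [MeasurableSpace Ω] {μ : Measure Ω}

lemma integrable_bilin_self {E F : Type*} [NormedAddCommGroup E] [NormedSpace ℝ E]
    [NormedAddCommGroup F] [NormedSpace ℝ F] {X : Ω → E}
    (B : E →L[ℝ] E →L[ℝ] F) (hX : MemLp X 2 μ) : Integrable (fun ω => B (X ω) (X ω)) μ := by
  refine (hX.integrable_norm_pow two_ne_zero |>.const_mul ‖B‖).mono'
    (B.aestronglyMeasurable_comp₂ hX.1 hX.1) (.of_forall fun ω => ?_)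
  simpa [pow_two, mul_assoc] using B.le_opNorm₂ (X ω) (X ω)

lemma norm_integral_comp_sub_taylor_two_le [IsProbabilityMeasure μ] {E F : Type*}
    [NormedAddCommGroup E] [NormedSpace ℝ E] [CompleteSpace E]
    [NormedAddCommGroup F] [NormedSpace ℝ F] [CompleteSpace F] {s : Set E} {p : E}
    {f : E → F} {f' : E → E →L[ℝ] F} {f'' : E → E →L[ℝ] E →L[ℝ] F} {G : ℝ}
    (hs : StarConvex ℝ p s) (hf : ∀ y ∈ s, HasFDerivWithinAt f (f' y) s y)
    (hf' : ∀ y ∈ s, HasFDerivWithinAt f' (f'' y) s y)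
    (hlip : ∀ y ∈ s, ‖f'' y - f'' p‖ ≤ G * ‖y - p‖) {X : Ω → E} (hX : MemLp X 3 μ)
    (hXs : ∀ᵐ ω ∂μ, X ω ∈ s) (hXp : ∫ ω, X ω ∂μ = p)
    (hfX : AEStronglyMeasurable (fun ω => f (X ω)) μ) :
    ‖∫ ω, f (X ω) ∂μ - f p - (1 / 2 : ℝ) • ∫ ω, f'' p (X ω - p) (X ω - p) ∂μ‖ ≤
      G / 6 * ∫ ω, ‖X ω - p‖ ^ 3 ∂μ := by
  have hsub : MemLp (fun ω => X ω - p) 3 μ := hX.sub (memLp_const p)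
  have hlin : Integrable (fun ω => f' p (X ω - p)) μ :=
    (f' p).integrable_comp (hsub.integrable (by norm_num))
  have hquad : Integrable (fun ω => (1 / 2 : ℝ) • f'' p (X ω - p) (X ω - p)) μ :=
    (integrable_bilin_self (f'' p) (hsub.mono_exponent (by norm_num))).smul _
  have hcube : Integrable (fun ω => G / 6 * ‖X ω - p‖ ^ 3) μ :=
    (hsub.integrable_norm_pow three_ne_zero).const_mul _
  have hlin_zero : ∫ ω, f' p (X ω - p) ∂μ = 0 := by
    rw [(f' p).integral_comp_comm (hsub.integrable (by norm_num)),
      integral_sub (hX.integrable (by norm_num)) (integrable_const p), hXp]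
    simp
  have hrem_le : ∀ᵐ ω ∂μ, ‖f (X ω) - f p - f' p (X ω - p)
      - (1 / 2 : ℝ) • f'' p (X ω - p) (X ω - p)‖ ≤ G / 6 * ‖X ω - p‖ ^ 3 :=
    hXs.mono fun ω hω => norm_sub_taylor_two_le hs hω hf hf' hlip
  have hrem : Integrable (fun ω => f (X ω) - f p - f' p (X ω - p)
      - (1 / 2 : ℝ) • f'' p (X ω - p) (X ω - p)) μ :=
    hcube.mono' (((hfX.sub aestronglyMeasurable_const).sub hlin.1).sub hquad.1) hrem_le
  have hf_int : Integrable (fun ω => f (X ω)) μ := by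
    refine (((hrem.add hquad).add hlin).add (integrable_const (f p))).congr
      (.of_forall fun ω => ?_)
    simp
  have hf_sub : Integrable (fun ω => f (X ω) - f p) μ := hf_int.sub (integrable_const _)
  have hf_sub_lin : Integrable (fun ω => f (X ω) - f p - f' p (X ω - p)) μ := hf_sub.sub hlin
  have hrem_integral : ∫ ω, (f (X ω) - f p - f' p (X ω - p)
      - (1 / 2 : ℝ) • f'' p (X ω - p) (X ω - p)) ∂μ =
      ∫ ω, f (X ω) ∂μ - f p - (1 / 2 : ℝ) • ∫ ω, f'' p (X ω - p) (X ω - p) ∂μ := by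
    rw [integral_sub hf_sub_lin hquad, integral_sub hf_sub hlin,
      integral_sub hf_int (integrable_const _), hlin_zero, integral_smul]
    simp
  rw [← hrem_integral, ← integral_const_mul]
  exact norm_integral_le_of_norm_le hcube hrem_le

lemma abs_integral_comp_sub_taylor_two_le [IsProbabilityMeasure μ] {E : Type*}
    [NormedAddCommGroup E] [InnerProductSpace ℝ E] [CompleteSpace E] {s : Set E} {p : E}
    {f : E → ℝ} {grad : E → E} {Hess : E → E →L[ℝ] E} {G : ℝ} (hs : StarConvex ℝ p s)
    (hf : ∀ y ∈ s, HasGradientWithinAt f (grad y) s y)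
    (hgrad : ∀ y ∈ s, HasFDerivWithinAt grad (Hess y) s y)
    (hlip : ∀ y ∈ s, ‖Hess y - Hess p‖ ≤ G * ‖y - p‖) {X : Ω → E} (hX : MemLp X 3 μ)
    (hXs : ∀ᵐ ω ∂μ, X ω ∈ s) (hXp : ∫ ω, X ω ∂μ = p)
    (hfX : AEStronglyMeasurable (fun ω => f (X ω)) μ) :
    |∫ ω, f (X ω) ∂μ - f p - 1 / 2 * ∫ ω, ⟪Hess p (X ω - p), X ω - p⟫ ∂μ| ≤
      G / 6 * ∫ ω, ‖X ω - p‖ ^ 3 ∂μ := by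
  let dual : E →L[ℝ] E →L[ℝ] ℝ := innerSL ℝ
  refine norm_integral_comp_sub_taylor_two_le (f' := fun y => dual (grad y))
    (f'' := fun y => dual ∘L Hess y) hs (fun y hy => (hf y hy).hasFDerivWithinAt)
    (fun y hy => dual.hasFDerivAt.comp_hasFDerivWithinAt y (hgrad y hy)) (fun y hy => ?_)
    hX hXs hXp hfX
  calc ‖dual ∘L Hess y - dual ∘L Hess p‖ = ‖dual ∘L (Hess y - Hess p)‖ := by
        rw [ContinuousLinearMap.comp_sub]
    _ ≤ 1 * ‖Hess y - Hess p‖ :=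
        (dual.opNorm_comp_le _).trans (by gcongr; exact norm_innerSL_le ℝ)
    _ ≤ G * ‖y - p‖ := by rw [one_mul]; exact hlip y hy

variable {ι : Type*} [Fintype ι]

lemma inner_map_self_eq_sum_single [DecidableEq ι] (A : EuclideanSpace ℝ ι →L[ℝ] EuclideanSpace ℝ ι)
    (v : EuclideanSpace ℝ ι) :
    ⟪A v, v⟫ = ∑ i, ∑ j, A (EuclideanSpace.single j 1) i * (v j * v i) := by
  have hAv : A v = ∑ j, v j • A (EuclideanSpace.single j 1) := by
    conv_lhs => rw [← (EuclideanSpace.basisFun ι ℝ).sum_repr v]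
    simp
  simp only [hAv, PiLp.inner_apply, RCLike.inner_apply, conj_trivial, WithLp.ofLp_sum,
    Finset.sum_apply, PiLp.smul_apply, smul_eq_mul, Finset.mul_sum]
  exact Finset.sum_congr rfl fun i _ => Finset.sum_congr rfl fun j _ => by ring

lemma integral_inner_map_sub_self [IsFiniteMeasure μ] [DecidableEq ι]
    {X : Ω → EuclideanSpace ℝ ι} {p : EuclideanSpace ℝ ι} (hX : MemLp X 2 μ) (hXp : ∫ ω, X ω ∂μ = p)
    (A : EuclideanSpace ℝ ι →L[ℝ] EuclideanSpace ℝ ι) :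
    ∫ ω, ⟪A (X ω - p), X ω - p⟫ ∂μ =
      ∑ i, ∑ j, A (EuclideanSpace.single j 1) i * cov[fun ω => X ω j, fun ω => X ω i; μ] := by
  have hmean (i : ι) : ∫ ω, X ω i ∂μ = p i := by
    rw [← hXp, eval_integral_piLp fun j => (hX.eval_piLp j).integrable one_le_two]
  have hsub (i : ι) : MemLp (fun ω => X ω i - p i) 2 μ := (hX.eval_piLp i).sub (memLp_const _)
  have hint (i j : ι) : Integrable (fun ω => A (EuclideanSpace.single j 1) i *
      ((X ω j - p j) * (X ω i - p i))) μ := ((hsub j).integrable_mul (hsub i)).const_mul _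
  simp only [inner_map_self_eq_sum_single, PiLp.sub_apply, covariance, hmean]
  rw [integral_finsetSum _ fun i _ => integrable_finsetSum _ fun j _ => hint i j]
  refine Finset.sum_congr rfl fun i _ => ?_
  rw [integral_finsetSum _ fun j _ => hint i j]
  simp only [integral_const_mul]

lemma integral_norm_sub_sq [IsFiniteMeasure μ] {X : Ω → EuclideanSpace ℝ ι} {p : EuclideanSpace ℝ ι}
    (hX : MemLp X 2 μ) (hXp : ∫ ω, X ω ∂μ = p) :
    ∫ ω, ‖X ω - p‖ ^ 2 ∂μ = ∑ i, Var[fun ω => X ω i; μ] := by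
  classical
  have h := integral_inner_map_sub_self hX hXp (.id ℝ _)
  simpa [real_inner_self_eq_norm_sq, Pi.single_apply,
    covariance_self (hX.eval_piLp _).1.aemeasurable] using h

end Expectation

section GammaMoments

open Set Real
open scoped ENNReal

lemma lintegral_gammaMeasure (a r : ℝ) (f : ℝ → ℝ≥0∞) :
    ∫⁻ x, f x ∂gammaMeasure a r =
      ∫⁻ x in Ioi 0, .ofReal (r ^ a / Gamma a * x ^ (a - 1) * exp (-(r * x))) * f x := by
  rw [gammaMeasure, lintegral_withDensity_eq_lintegral_mul_non_measurable₀ _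
      (by unfold gammaPDF; fun_prop) (.of_forall fun x => by simp [gammaPDF]),
    ← lintegral_indicator measurableSet_Ioi]
  refine lintegral_congr_ae ?_
  filter_upwards [Measure.ae_ne volume (0 : ℝ)] with x hx
  rcases hx.lt_or_gt with hx | hx
  · simp [gammaPDF_of_neg hx, hx.not_gt]
  · simp [gammaPDF_of_nonneg hx.le, hx]

lemma ae_pos_gammaMeasure (a r : ℝ) : ∀ᵐ x ∂gammaMeasure a r, 0 < x := by
  rw [ae_iff, ← lintegral_indicator_one (by measurability), lintegral_gammaMeasure]
  refine setLIntegral_eq_zero measurableSet_Ioi fun x hx => ?_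
  simp_all

lemma lintegral_rpow_mul_exp_neg_gammaMeasure {a r s t : ℝ} (ha : 0 < a) (hr : 0 < r)
    (has : 0 < a + s) (hrt : 0 < r + t) :
    ∫⁻ x, .ofReal (x ^ s * exp (-(t * x))) ∂gammaMeasure a r =
      .ofReal (Gamma (a + s) / Gamma a * (r ^ a / (r + t) ^ (a + s))) := by
  have := isProbabilityMeasure_gammaMeasure has hrt
  have htilt (x : ℝ) (hx : 0 < x) :
      r ^ a / Gamma a * x ^ (a - 1) * exp (-(r * x)) * (x ^ s * exp (-(t * x))) =
        Gamma (a + s) / Gamma a * (r ^ a / (r + t) ^ (a + s)) *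
          ((r + t) ^ (a + s) / Gamma (a + s) * x ^ (a + s - 1) * exp (-((r + t) * x))) := by
    rw [add_mul, neg_add, exp_add, add_sub_right_comm, rpow_add hx]
    field_simp
  calc ∫⁻ x, .ofReal (x ^ s * exp (-(t * x))) ∂gammaMeasure a r
      = ∫⁻ x in Ioi 0, .ofReal (Gamma (a + s) / Gamma a * (r ^ a / (r + t) ^ (a + s))) *
          (.ofReal ((r + t) ^ (a + s) / Gamma (a + s) * x ^ (a + s - 1) *
            exp (-((r + t) * x))) * 1) := by
        rw [lintegral_gammaMeasure]
        refine setLIntegral_congr_fun measurableSet_Ioi fun x (hx : 0 < x) => ?_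
        rw [mul_one, ← ENNReal.ofReal_mul (by positivity), ← ENNReal.ofReal_mul (by positivity),
          htilt x hx]
    _ = _ := by
        rw [lintegral_const_mul' _ _ ENNReal.ofReal_ne_top, ← lintegral_gammaMeasure,
          lintegral_one, measure_univ, mul_one]

lemma ofReal_rpow_neg_eq_lintegral {x s : ℝ} (hx : 0 < x) (hs : 0 < s) :
    ENNReal.ofReal (x ^ (-s)) =
      ∫⁻ t in Ioi 0, .ofReal (t ^ (s - 1) / Gamma s) * .ofReal (exp (-(t * x))) := by
  have := isProbabilityMeasure_gammaMeasure hs hx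
  calc ENNReal.ofReal (x ^ (-s)) = .ofReal (x ^ (-s)) * ∫⁻ _, 1 ∂gammaMeasure s x := by simp
    _ = _ := by
      rw [lintegral_gammaMeasure, ← lintegral_const_mul' _ _ ENNReal.ofReal_ne_top]
      refine setLIntegral_congr_fun measurableSet_Ioi fun t (ht : 0 < t) => ?_
      rw [mul_one, ← ENNReal.ofReal_mul (by positivity), ← ENNReal.ofReal_mul (by positivity),
        rpow_neg hx.le]
      congr 1
      field_simp

lemma lintegral_mul_rpow_neg_eq_lintegral_exp_neg {Ω : Type*} [MeasurableSpace Ω]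
    {μ : Measure Ω} [SFinite μ] {Y : Ω → ℝ≥0∞} {S : Ω → ℝ} {s : ℝ} (hY : AEMeasurable Y μ)
    (hS : AEMeasurable S μ) (hS_pos : ∀ᵐ ω ∂μ, 0 < S ω) (hs : 0 < s) :
    ∫⁻ ω, Y ω * .ofReal (S ω ^ (-s)) ∂μ = ∫⁻ t in Ioi 0, .ofReal (t ^ (s - 1) / Gamma s) *
      ∫⁻ ω, Y ω * .ofReal (exp (-(t * S ω))) ∂μ := by
  have hmeas : AEMeasurable (Function.uncurry fun (ω : Ω) (t : ℝ) => Y ω *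
      (.ofReal (t ^ (s - 1) / Gamma s) * .ofReal (exp (-(t * S ω)))))
      (μ.prod (volume.restrict (Ioi 0))) := by
    have hexp : AEMeasurable (fun z : Ω × ℝ => ENNReal.ofReal (exp (-(z.2 * S z.1))))
        (μ.prod (volume.restrict (Ioi 0))) :=
      (measurable_exp.comp_aemeasurable
        (measurable_snd.aemeasurable.mul hS.comp_fst).neg).ennreal_ofReal
    exact hY.comp_fst.mul (.mul (by fun_prop) hexp)
  calc ∫⁻ ω, Y ω * .ofReal (S ω ^ (-s)) ∂μ
      = ∫⁻ ω, (∫⁻ t in Ioi 0, Y ω *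
          (.ofReal (t ^ (s - 1) / Gamma s) * .ofReal (exp (-(t * S ω))))) ∂μ := by
        refine lintegral_congr_ae (hS_pos.mono fun ω hω => ?_)
        dsimp only
        rw [ofReal_rpow_neg_eq_lintegral hω hs, lintegral_const_mul _ (by fun_prop)]
    _ = ∫⁻ t in Ioi 0, ∫⁻ ω, Y ω *
          (.ofReal (t ^ (s - 1) / Gamma s) * .ofReal (exp (-(t * S ω)))) ∂μ :=
        lintegral_lintegral_swap hmeas
    _ = _ := by
        refine lintegral_congr fun t => ?_
        simp only [mul_left_comm (Y _)]
        exact lintegral_const_mul' _ _ ENNReal.ofReal_ne_top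

lemma lintegral_rpow_mul_one_add_rpow_neg {a s : ℝ} (ha : 0 < a) (hs : 0 < s) :
    ∫⁻ t in Ioi 0, ENNReal.ofReal (t ^ (s - 1) / Gamma s) * .ofReal ((1 + t) ^ (-(a + s))) =
      .ofReal (Gamma a / Gamma (a + s)) := by
  have has : 0 < a + s := add_pos ha hs
  have := isProbabilityMeasure_gammaMeasure ha one_pos
  have hlaplace (t : ℝ) (ht : 0 < t) : ENNReal.ofReal ((1 + t) ^ (-(a + s))) =
      .ofReal (Gamma a / Gamma (a + s)) *
        ∫⁻ x, .ofReal (x ^ s) * .ofReal (exp (-(t * x))) ∂gammaMeasure a 1 := by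
    have hΓ : Gamma a / Gamma (a + s) * (Gamma (a + s) / Gamma a) = 1 := by field_simp
    have hmul : ∀ᵐ x ∂gammaMeasure a 1, ENNReal.ofReal (x ^ s) * .ofReal (exp (-(t * x))) =
        .ofReal (x ^ s * exp (-(t * x))) :=
      (ae_pos_gammaMeasure a 1).mono fun x hx => (ENNReal.ofReal_mul (by positivity)).symm
    rw [lintegral_congr_ae hmul, lintegral_rpow_mul_exp_neg_gammaMeasure ha one_pos has
      (by positivity), ← ENNReal.ofReal_mul (by positivity), ← mul_assoc, hΓ, one_mul, one_rpow,
      rpow_neg (by positivity), one_div]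
  have hone : ∫⁻ x, ENNReal.ofReal (x ^ s) * .ofReal (x ^ (-s)) ∂gammaMeasure a 1 = 1 := by
    rw [← measure_univ (μ := gammaMeasure a 1), ← lintegral_one]
    refine lintegral_congr_ae ((ae_pos_gammaMeasure a 1).mono fun x hx => ?_)
    simp [← ENNReal.ofReal_mul (rpow_nonneg hx.le s), ← rpow_add hx]
  calc ∫⁻ t in Ioi 0, ENNReal.ofReal (t ^ (s - 1) / Gamma s) * .ofReal ((1 + t) ^ (-(a + s)))
      = .ofReal (Gamma a / Gamma (a + s)) * ∫⁻ t in Ioi 0, .ofReal (t ^ (s - 1) / Gamma s) *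
          ∫⁻ x, .ofReal (x ^ s) * .ofReal (exp (-(t * x))) ∂gammaMeasure a 1 := by
        rw [← lintegral_const_mul' _ _ ENNReal.ofReal_ne_top]
        refine setLIntegral_congr_fun measurableSet_Ioi fun t ht => ?_
        rw [hlaplace t ht, mul_left_comm]
    _ = .ofReal (Gamma a / Gamma (a + s)) := by
        rw [← lintegral_mul_rpow_neg_eq_lintegral_exp_neg (S := fun x => x) (by fun_prop)
          aemeasurable_id (ae_pos_gammaMeasure a 1) hs, hone, mul_one]

end GammaMoments

section Dirichlet

open Set Real
open scoped ENNReal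

variable {ι : Type*} [Fintype ι]

lemma lintegral_pi_prod_eq_prod_lintegral {X : ι → Type*} [∀ i, MeasurableSpace (X i)]
    {μ : ∀ i, Measure (X i)} [∀ i, IsProbabilityMeasure (μ i)] {f : ∀ i, X i → ℝ≥0∞}
    (hf : ∀ i, Measurable (f i)) :
    ∫⁻ x, ∏ i, f i (x i) ∂Measure.pi μ = ∏ i, ∫⁻ x, f i x ∂μ i := by
  refine (lintegral_prod_eq_prod_lintegral_of_indepFun Finset.univ
    (fun i (x : ∀ i, X i) => f i (x i)) (iIndepFun_pi fun i => (hf i).aemeasurable)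
    fun i => (hf i).comp (measurable_pi_apply i)).trans ?_
  exact Finset.prod_congr rfl fun i _ =>
    (measurePreserving_eval μ i).lintegral_comp (hf i)

/-- The Dirichlet distribution with parameter `α`: the law of independent `Gamma (α i, 1)`
variables divided by their sum. -/
noncomputable def dirichletMeasure (α : ι → ℝ) : Measure (EuclideanSpace ℝ ι) :=
  (Measure.pi fun i => gammaMeasure (α i) 1).map fun w => WithLp.toLp 2 fun i => w i / ∑ j, w j

/-- The barycentre of `dirichletMeasure α`, i.e. `α` normalised to a probability vector. -/
noncomputable def dirichletMean (α : ι → ℝ) : EuclideanSpace ℝ ι :=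
  WithLp.toLp 2 fun i => α i / ∑ j, α j

variable (ι) in
/-- The probability simplex, as a subset of Euclidean space rather than of `ι → ℝ`
(where it is `stdSimplex ℝ ι`). -/
def euclideanSimplex : Set (EuclideanSpace ℝ ι) :=
  WithLp.ofLp ⁻¹' stdSimplex ℝ ι

lemma toLp_div_sum_mem_euclideanSimplex [Nonempty ι] {w : ι → ℝ} (hw : ∀ i, 0 < w i) :
    WithLp.toLp 2 (fun i => w i / ∑ j, w j) ∈ euclideanSimplex ι := by
  have hsum : 0 < ∑ j, w j := Finset.sum_pos (fun i _ => hw i) Finset.univ_nonempty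
  refine ⟨fun i => (div_pos (hw i) hsum).le, ?_⟩
  simp only [← Finset.sum_div]
  exact div_self hsum.ne'

variable {α : ι → ℝ}

lemma measurable_toLp_div_sum :
    Measurable fun w : ι → ℝ => (WithLp.toLp 2 fun i => w i / ∑ j, w j : EuclideanSpace ℝ ι) := by
  fun_prop

lemma isProbabilityMeasure_dirichletMeasure (hα : ∀ i, 0 < α i) :
    IsProbabilityMeasure (dirichletMeasure α) := by
  have (i : ι) := isProbabilityMeasure_gammaMeasure (hα i) one_pos
  exact Measure.isProbabilityMeasure_map measurable_toLp_div_sum.aemeasurable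

lemma hasLaw_dirichletMeasure_of_iIndepFun {Ω : Type*} [MeasurableSpace Ω] {μ : Measure Ω}
    {W : ι → Ω → ℝ} (hW : ∀ i, HasLaw (W i) (gammaMeasure (α i) 1) μ) (hindep : iIndepFun W μ) :
    HasLaw (fun ω => WithLp.toLp 2 fun i => W i ω / ∑ j, W j ω) (dirichletMeasure α) μ :=
  (measurable_toLp_div_sum.measurePreserving _).fun_comp_hasLaw (hindep.hasLaw_pi hW)

lemma ae_pos_pi_gammaMeasure (hα : ∀ i, 0 < α i) :
    ∀ᵐ w ∂Measure.pi fun i => gammaMeasure (α i) 1, ∀ i, 0 < w i := by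
  have (i : ι) := isProbabilityMeasure_gammaMeasure (hα i) one_pos
  exact ae_all_iff.2 fun i =>
    (measurePreserving_eval _ i).quasiMeasurePreserving.ae (ae_pos_gammaMeasure (α i) 1)

lemma isClosed_euclideanSimplex : IsClosed (euclideanSimplex ι) :=
  (isClosed_stdSimplex ℝ ι).preimage (PiLp.continuous_ofLp 2 _)

lemma convex_euclideanSimplex : Convex ℝ (euclideanSimplex ι) :=
  (convex_stdSimplex ℝ ι).linear_preimage (WithLp.linearEquiv 2 ℝ (ι → ℝ)).toLinearMap

lemma dirichletMeasure_ae_mem_euclideanSimplex [Nonempty ι] (hα : ∀ i, 0 < α i) :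
    ∀ᵐ q ∂dirichletMeasure α, q ∈ euclideanSimplex ι :=
  (ae_map_iff measurable_toLp_div_sum.aemeasurable isClosed_euclideanSimplex.measurableSet).2 <|
    (ae_pos_pi_gammaMeasure hα).mono fun _ hw => toLp_div_sum_mem_euclideanSimplex hw

lemma aestronglyMeasurable_dirichletMeasure_of_continuousOn [Nonempty ι] (hα : ∀ i, 0 < α i)
    {F : Type*} [TopologicalSpace F] [TopologicalSpace.PseudoMetrizableSpace F]
    {f : EuclideanSpace ℝ ι → F} (hf : ContinuousOn f (euclideanSimplex ι)) :
    AEStronglyMeasurable f (dirichletMeasure α) := by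
  rw [← Measure.restrict_eq_self_of_ae_mem (dirichletMeasure_ae_mem_euclideanSimplex hα)]
  exact hf.aestronglyMeasurable isClosed_euclideanSimplex.measurableSet

lemma lintegral_prod_rpow_mul_exp_neg_pi_gammaMeasure {s : ι → ℝ} {t : ℝ} (hα : ∀ i, 0 < α i)
    (hαs : ∀ i, 0 < α i + s i) (ht : 0 < 1 + t) :
    ∫⁻ w, (∏ i, .ofReal (w i ^ s i)) * .ofReal (exp (-(t * ∑ i, w i)))
      ∂Measure.pi (fun i => gammaMeasure (α i) 1) =
      .ofReal (∏ i, Gamma (α i + s i) / Gamma (α i)) *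
        .ofReal ((1 + t) ^ (-(∑ i, α i + ∑ i, s i))) := by
  have (i : ι) := isProbabilityMeasure_gammaMeasure (hα i) one_pos
  have hpos (i : ι) : 0 < Gamma (α i + s i) / Gamma (α i) :=
    div_pos (Gamma_pos_of_pos (hαs i)) (Gamma_pos_of_pos (hα i))
  calc _ = ∫⁻ w, ∏ i, .ofReal (w i ^ s i * exp (-(t * w i)))
        ∂Measure.pi (fun i => gammaMeasure (α i) 1) := by
        refine lintegral_congr_ae ((ae_pos_pi_gammaMeasure hα).mono fun w hw => ?_)
        dsimp only
        rw [Finset.mul_sum, ← Finset.sum_neg_distrib, exp_sum,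
          ENNReal.ofReal_prod_of_nonneg fun i _ => (exp_pos _).le, ← Finset.prod_mul_distrib]
        exact Finset.prod_congr rfl fun i _ =>
          (ENNReal.ofReal_mul (rpow_nonneg (hw i).le _)).symm
    _ = ∏ i, .ofReal (Gamma (α i + s i) / Gamma (α i) * (1 + t) ^ (-(α i + s i))) := by
        rw [lintegral_pi_prod_eq_prod_lintegral
          (f := fun i x => .ofReal (x ^ s i * exp (-(t * x)))) (by fun_prop)]
        refine Finset.prod_congr rfl fun i _ => ?_
        rw [lintegral_rpow_mul_exp_neg_gammaMeasure (hα i) one_pos (hαs i) ht, one_rpow, one_div,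
          rpow_neg ht.le]
    _ = _ := by
        rw [← ENNReal.ofReal_prod_of_nonneg fun i _ => by have := hpos i; positivity,
          Finset.prod_mul_distrib, ENNReal.ofReal_mul (Finset.prod_nonneg fun i _ => (hpos i).le),
          ← rpow_sum_of_pos ht, Finset.sum_neg_distrib, Finset.sum_add_distrib]

lemma lintegral_prod_rpow_dirichletMeasure {s : ι → ℝ} (hα : ∀ i, 0 < α i)
    (hαs : ∀ i, 0 < α i + s i) (hs : 0 < ∑ i, s i) :
    ∫⁻ q, ∏ i, .ofReal (q i ^ s i) ∂dirichletMeasure α =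
      .ofReal (Gamma (∑ i, α i) / Gamma (∑ i, α i + ∑ i, s i) *
        ∏ i, Gamma (α i + s i) / Gamma (α i)) := by
  have (i : ι) := isProbabilityMeasure_gammaMeasure (hα i) one_pos
  have : Nonempty ι := by
    by_contra! h
    simp at hs
  have hα₀ : 0 < ∑ i, α i := Finset.sum_pos (fun i _ => hα i) Finset.univ_nonempty
  have hsum_pos : ∀ᵐ w ∂Measure.pi fun i => gammaMeasure (α i) 1, 0 < ∑ i, w i :=
    (ae_pos_pi_gammaMeasure hα).mono fun w hw =>
      Finset.sum_pos (fun i _ => hw i) Finset.univ_nonempty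
  calc ∫⁻ q, ∏ i, .ofReal (q i ^ s i) ∂dirichletMeasure α
      = ∫⁻ w, (∏ i, .ofReal (w i ^ s i)) * .ofReal ((∑ i, w i) ^ (-∑ i, s i))
          ∂Measure.pi (fun i => gammaMeasure (α i) 1) := by
        rw [dirichletMeasure, lintegral_map (by fun_prop) measurable_toLp_div_sum]
        refine lintegral_congr_ae ?_
        filter_upwards [ae_pos_pi_gammaMeasure hα, hsum_pos] with w hw hsum
        rw [← Finset.sum_neg_distrib, rpow_sum_of_pos hsum, ENNReal.ofReal_prod_of_nonneg
          fun i _ => (rpow_pos_of_pos hsum _).le, ← Finset.prod_mul_distrib]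
        refine Finset.prod_congr rfl fun i _ => ?_
        rw [div_rpow (hw i).le hsum.le, div_eq_mul_inv, ← rpow_neg hsum.le,
          ENNReal.ofReal_mul (rpow_nonneg (hw i).le _)]
    _ = ∫⁻ t in Ioi 0, .ofReal (∏ i, Gamma (α i + s i) / Gamma (α i)) *
          (.ofReal (t ^ (∑ i, s i - 1) / Gamma (∑ i, s i)) *
            .ofReal ((1 + t) ^ (-(∑ i, α i + ∑ i, s i)))) := by
        rw [lintegral_mul_rpow_neg_eq_lintegral_exp_neg
          (Measurable.aemeasurable (by fun_prop)) (by fun_prop) hsum_pos hs]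
        refine setLIntegral_congr_fun measurableSet_Ioi fun t (ht : 0 < t) => ?_
        rw [lintegral_prod_rpow_mul_exp_neg_pi_gammaMeasure hα hαs (by positivity), mul_left_comm]
    _ = _ := by
        rw [lintegral_const_mul' _ _ ENNReal.ofReal_ne_top,
          lintegral_rpow_mul_one_add_rpow_neg hα₀ hs, mul_comm, ← ENNReal.ofReal_mul
          (div_pos (Gamma_pos_of_pos hα₀) (Gamma_pos_of_pos (add_pos hα₀ hs))).le]

lemma integral_prod_rpow_dirichletMeasure {s : ι → ℝ} (hα : ∀ i, 0 < α i)
    (hαs : ∀ i, 0 < α i + s i) (hs : 0 < ∑ i, s i) :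
    ∫ q, ∏ i, q i ^ s i ∂dirichletMeasure α =
      Gamma (∑ i, α i) / Gamma (∑ i, α i + ∑ i, s i) *
        ∏ i, Gamma (α i + s i) / Gamma (α i) := by
  have : Nonempty ι := by
    by_contra! h
    simp at hs
  have hα₀ : 0 < ∑ i, α i := Finset.sum_pos (fun i _ => hα i) Finset.univ_nonempty
  have hnonneg : ∀ᵐ q ∂dirichletMeasure α, ∀ i, 0 ≤ q i ^ s i :=
    (dirichletMeasure_ae_mem_euclideanSimplex hα).mono fun q hq i => rpow_nonneg (hq.1 i) _
  rw [integral_eq_lintegral_of_nonneg_ae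
      (hnonneg.mono fun q hq => Finset.prod_nonneg fun i _ => hq i)
      (Measurable.aestronglyMeasurable (by fun_prop)),
    lintegral_congr_ae (hnonneg.mono fun q hq =>
      ENNReal.ofReal_prod_of_nonneg fun i _ => hq i),
    lintegral_prod_rpow_dirichletMeasure hα hαs hs, ENNReal.toReal_ofReal]
  have hΓ (x : ℝ) (hx : 0 < x) : 0 ≤ Gamma x := (Gamma_pos_of_pos hx).le
  exact mul_nonneg (div_nonneg (hΓ _ hα₀) (hΓ _ (add_pos hα₀ hs)))
    (Finset.prod_nonneg fun i _ => div_nonneg (hΓ _ (hαs i)) (hΓ _ (hα i)))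

lemma prod_rpow_single [DecidableEq ι] (q : ι → ℝ) (i : ι) :
    ∏ k, q k ^ (Pi.single i 1 : ι → ℝ) k = q i := by
  simp [Pi.single_apply]

lemma prod_Gamma_add_single_div [DecidableEq ι] (hα : ∀ i, 0 < α i) (i : ι) :
    ∏ k, Gamma (α k + (Pi.single i 1 : ι → ℝ) k) / Gamma (α k) = α i := by
  have hΓ (k : ι) : Gamma (α k) ≠ 0 := (Gamma_pos_of_pos (hα k)).ne'
  rw [Fintype.prod_eq_single i fun k hk => by simp [hk, hΓ k], Pi.single_eq_same,
    Gamma_add_one (hα i).ne', mul_div_cancel_right₀ _ (hΓ i)]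

lemma integral_eval_dirichletMeasure (hα : ∀ i, 0 < α i) (i : ι) :
    ∫ q, q i ∂dirichletMeasure α = α i / ∑ k, α k := by
  classical
  have hα₀ : 0 < ∑ k, α k := Finset.sum_pos (fun k _ => hα k) ⟨i, Finset.mem_univ i⟩
  have hsingle (k : ι) : 0 ≤ (Pi.single i 1 : ι → ℝ) k :=
    (Pi.single_nonneg.2 zero_le_one : (0 : ι → ℝ) ≤ Pi.single i 1) k
  have h := integral_prod_rpow_dirichletMeasure (s := Pi.single i 1) hα
    (fun k => add_pos_of_pos_of_nonneg (hα k) (hsingle k)) (by simp)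
  simp only [prod_rpow_single, prod_Gamma_add_single_div hα, Finset.sum_pi_single',
    Finset.mem_univ, if_true, Gamma_add_one hα₀.ne'] at h
  rw [h]
  have := (Gamma_pos_of_pos hα₀).ne'
  field_simp

lemma integral_eval_mul_eval_dirichletMeasure [DecidableEq ι] (hα : ∀ i, 0 < α i) (i j : ι) :
    ∫ q, q j * q i ∂dirichletMeasure α =
      α j * (α i + if j = i then 1 else 0) / ((∑ k, α k) * (∑ k, α k + 1)) := by
  have : Nonempty ι := ⟨i⟩
  have hα₀ : 0 < ∑ k, α k := Finset.sum_pos (fun k _ => hα k) Finset.univ_nonempty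
  set δ : ι → ι → ℝ := fun i => Pi.single i 1
  have hδ (i k : ι) : 0 ≤ δ i k := (Pi.single_nonneg.2 zero_le_one : (0 : ι → ℝ) ≤ δ i) k
  have hαj (k : ι) : 0 < α k + δ j k := add_pos_of_pos_of_nonneg (hα k) (hδ j k)
  have hαij (k : ι) : 0 < α k + (δ j k + δ i k) := by
    rw [← add_assoc]; exact add_pos_of_pos_of_nonneg (hαj k) (hδ i k)
  have hδ_sum (i : ι) : ∑ k, δ i k = 1 := by simp [δ]
  have hprod : ∀ᵐ q ∂dirichletMeasure α, q j * q i = ∏ k, q k ^ (δ j k + δ i k) := by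
    filter_upwards [dirichletMeasure_ae_mem_euclideanSimplex hα] with q hq
    simp only [fun k => rpow_add_of_nonneg (hq.1 k) (hδ j k) (hδ i k), Finset.prod_mul_distrib,
      prod_rpow_single, δ]
  have hratio : ∏ k, Gamma (α k + (δ j k + δ i k)) / Gamma (α k) = (α i + δ j i) * α j := by
    rw [← prod_Gamma_add_single_div hα j, ← prod_Gamma_add_single_div hαj i,
      ← Finset.prod_mul_distrib]
    refine Finset.prod_congr rfl fun k _ => ?_
    rw [div_mul_div_cancel₀ (Gamma_pos_of_pos (hαj k)).ne', add_assoc]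
  rw [integral_congr_ae hprod, integral_prod_rpow_dirichletMeasure hα hαij
    (by simp [Finset.sum_add_distrib, hδ_sum]), hratio, Finset.sum_add_distrib, hδ_sum, hδ_sum,
    ← add_assoc, Gamma_add_one (by positivity), Gamma_add_one hα₀.ne']
  have := (Gamma_pos_of_pos hα₀).ne'
  simp only [δ, Pi.single_apply, eq_comm (a := i)]
  field_simp

lemma norm_le_one_of_mem_euclideanSimplex {q : EuclideanSpace ℝ ι}
    (hq : q ∈ euclideanSimplex ι) : ‖q‖ ≤ 1 := by
  rw [← sq_le_one_iff₀ (norm_nonneg q), EuclideanSpace.real_norm_sq_eq, ← hq.2]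
  exact Finset.sum_le_sum fun i _ =>
    pow_le_of_le_one (hq.1 i) (mem_Icc_of_mem_stdSimplex hq i).2 two_ne_zero

lemma one_div_card_le_norm_sq_of_mem_euclideanSimplex [Nonempty ι] {q : EuclideanSpace ℝ ι}
    (hq : q ∈ euclideanSimplex ι) : 1 / (Fintype.card ι : ℝ) ≤ ‖q‖ ^ 2 := by
  have h := sq_sum_le_card_mul_sum_sq (s := Finset.univ) (f := q)
  rw [show ∑ i, q i = 1 from hq.2, ← EuclideanSpace.real_norm_sq_eq] at h
  rw [div_le_iff₀' (by exact_mod_cast Fintype.card_pos)]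
  simpa using h

lemma memLp_id_dirichletMeasure [Nonempty ι] (hα : ∀ i, 0 < α i) (p : ℝ≥0∞) :
    MemLp (fun q => q) p (dirichletMeasure α) := by
  have := isProbabilityMeasure_dirichletMeasure hα
  exact .of_bound aestronglyMeasurable_id 1
    ((dirichletMeasure_ae_mem_euclideanSimplex hα).mono fun _ =>
      norm_le_one_of_mem_euclideanSimplex)

lemma integral_id_dirichletMeasure [Nonempty ι] (hα : ∀ i, 0 < α i) :
    ∫ q, q ∂dirichletMeasure α = dirichletMean α := by
  have := isProbabilityMeasure_dirichletMeasure hα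
  ext i
  rw [eval_integral_piLp fun j => ((memLp_id_dirichletMeasure hα 1).eval_piLp j).integrable le_rfl]
  exact integral_eval_dirichletMeasure hα i

lemma dirichletMean_mem_euclideanSimplex [Nonempty ι] (hα : ∀ i, 0 < α i) :
    dirichletMean α ∈ euclideanSimplex ι :=
  toLp_div_sum_mem_euclideanSimplex hα

lemma covariance_eval_dirichletMeasure [DecidableEq ι] (hα : ∀ i, 0 < α i) (i j : ι) :
    cov[fun q => q j, fun q => q i; dirichletMeasure α] =
      ((if j = i then dirichletMean α j else 0) - dirichletMean α j * dirichletMean α i) /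
        (∑ k, α k + 1) := by
  have : Nonempty ι := ⟨i⟩
  have hα₀ : 0 < ∑ k, α k := Finset.sum_pos (fun k _ => hα k) Finset.univ_nonempty
  have := isProbabilityMeasure_dirichletMeasure hα
  have hLp (k : ι) := (memLp_id_dirichletMeasure hα 2).eval_piLp k
  rw [covariance_eq_sub (hLp j) (hLp i)]
  simp only [Pi.mul_apply, integral_eval_dirichletMeasure hα,
    integral_eval_mul_eval_dirichletMeasure hα, dirichletMean]
  split_ifs <;> field_simp <;> ring

variable [Nonempty ι]

/-- The coefficient `L₁(p) = ½ tr (A (Diag p - p pᵀ))` of the second-order correction to the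
plug-in loss, with the trace written out in the entries `A i j = (A eⱼ)ᵢ` of `A`. -/
noncomputable def pluginCorrection [DecidableEq ι] (A : EuclideanSpace ℝ ι →L[ℝ] EuclideanSpace ℝ ι)
    (p : EuclideanSpace ℝ ι) : ℝ :=
  (1 / 2) * ∑ i, ∑ j,
    A (EuclideanSpace.single j 1) i * ((if j = i then p j else 0) - p j * p i)

lemma half_integral_inner_map_sub_dirichletMean [DecidableEq ι] (hα : ∀ i, 0 < α i)
    (A : EuclideanSpace ℝ ι →L[ℝ] EuclideanSpace ℝ ι) :
    1 / 2 * ∫ q, ⟪A (q - dirichletMean α), q - dirichletMean α⟫ ∂dirichletMeasure α =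
      pluginCorrection A (dirichletMean α) / (∑ i, α i + 1) := by
  have := isProbabilityMeasure_dirichletMeasure hα
  have h := integral_inner_map_sub_self (memLp_id_dirichletMeasure hα 2)
    (integral_id_dirichletMeasure hα) A
  simp only [h, covariance_eval_dirichletMeasure hα, pluginCorrection, mul_div_assoc,
    Finset.sum_div]

lemma integral_norm_sub_dirichletMean_sq (hα : ∀ i, 0 < α i) :
    ∫ q, ‖q - dirichletMean α‖ ^ 2 ∂dirichletMeasure α =
      (1 - ‖dirichletMean α‖ ^ 2) / (∑ i, α i + 1) := by
  classical
  have := isProbabilityMeasure_dirichletMeasure hα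
  have hLp := memLp_id_dirichletMeasure hα 2
  have hvar (i : ι) : Var[fun q => q i; dirichletMeasure α] =
      (dirichletMean α i - dirichletMean α i ^ 2) / (∑ k, α k + 1) := by
    rw [← covariance_self (hLp.eval_piLp i).1.aemeasurable, covariance_eval_dirichletMeasure hα,
      if_pos rfl, pow_two]
  rw [integral_norm_sub_sq hLp (integral_id_dirichletMeasure hα), Fintype.sum_congr _ _ hvar,
    ← Finset.sum_div, Finset.sum_sub_distrib, ← EuclideanSpace.real_norm_sq_eq,
    show ∑ i, dirichletMean α i = 1 from (dirichletMean_mem_euclideanSimplex hα).2]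

lemma integral_norm_sub_dirichletMean_sq_le (hα : ∀ i, 0 < α i) :
    ∫ q, ‖q - dirichletMean α‖ ^ 2 ∂dirichletMeasure α ≤
      (1 - 1 / (Fintype.card ι : ℝ)) / (∑ i, α i + 1) := by
  have hα₀ : 0 < ∑ i, α i := Finset.sum_pos (fun i _ => hα i) Finset.univ_nonempty
  rw [integral_norm_sub_dirichletMean_sq hα]
  gcongr
  exact one_div_card_le_norm_sq_of_mem_euclideanSimplex (dirichletMean_mem_euclideanSimplex hα)

lemma abs_pluginCorrection_dirichletMean_le [DecidableEq ι] (hα : ∀ i, 0 < α i)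
    (A : EuclideanSpace ℝ ι →L[ℝ] EuclideanSpace ℝ ι) :
    |pluginCorrection A (dirichletMean α)| ≤ 1 / 2 * (1 - 1 / (Fintype.card ι : ℝ)) * ‖A‖ := by
  have hα₀ : 0 < ∑ i, α i := Finset.sum_pos (fun i _ => hα i) Finset.univ_nonempty
  have hsq : Integrable (fun q => ‖q - dirichletMean α‖ ^ 2) (dirichletMeasure α) := by
    have := isProbabilityMeasure_dirichletMeasure hα
    exact ((memLp_id_dirichletMeasure hα 2).sub (memLp_const _)).integrable_norm_pow two_ne_zero
  have hA (v : EuclideanSpace ℝ ι) : ‖⟪A v, v⟫‖ ≤ ‖A‖ * ‖v‖ ^ 2 :=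
    calc ‖⟪A v, v⟫‖ ≤ ‖A v‖ * ‖v‖ := norm_inner_le_norm _ _
      _ ≤ ‖A‖ * ‖v‖ * ‖v‖ := by gcongr; exact A.le_opNorm v
      _ = ‖A‖ * ‖v‖ ^ 2 := by ring
  have hc : 0 < ∑ i, α i + 1 := by positivity
  rw [← div_le_div_iff_of_pos_right hc]
  calc |pluginCorrection A (dirichletMean α)| / (∑ i, α i + 1)
      = |pluginCorrection A (dirichletMean α) / (∑ i, α i + 1)| := by rw [abs_div, abs_of_pos hc]
    _ = 1 / 2 * ‖∫ q, ⟪A (q - dirichletMean α), q - dirichletMean α⟫ ∂dirichletMeasure α‖ := by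
        rw [← half_integral_inner_map_sub_dirichletMean hα, abs_mul, abs_of_pos one_half_pos,
          Real.norm_eq_abs]
    _ ≤ 1 / 2 * (‖A‖ * ((1 - 1 / (Fintype.card ι : ℝ)) / (∑ i, α i + 1))) := by
        gcongr
        refine (norm_integral_le_of_norm_le (hsq.const_mul ‖A‖) (.of_forall fun q => hA _)).trans ?_
        rw [integral_const_mul]
        gcongr
        exact integral_norm_sub_dirichletMean_sq_le hα
    _ = _ := by ring

lemma integral_norm_sub_dirichletMean_pow_three_le (hα : ∀ i, 0 < α i) :
    ∫ q, ‖q - dirichletMean α‖ ^ 3 ∂dirichletMeasure α ≤ 2 / (∑ i, α i + 1) := by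
  have := isProbabilityMeasure_dirichletMeasure hα
  have hα₀ : 0 < ∑ i, α i := Finset.sum_pos (fun i _ => hα i) Finset.univ_nonempty
  have hLp (k : ℝ≥0∞) : MemLp (fun q => q - dirichletMean α) k (dirichletMeasure α) :=
    (memLp_id_dirichletMeasure hα k).sub (memLp_const _)
  have hdiam : ∀ᵐ q ∂dirichletMeasure α, ‖q - dirichletMean α‖ ≤ 2 := by
    filter_upwards [dirichletMeasure_ae_mem_euclideanSimplex hα] with q hq
    linarith [norm_sub_le q (dirichletMean α), norm_le_one_of_mem_euclideanSimplex hq,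
      norm_le_one_of_mem_euclideanSimplex (dirichletMean_mem_euclideanSimplex hα)]
  calc ∫ q, ‖q - dirichletMean α‖ ^ 3 ∂dirichletMeasure α
      ≤ ∫ q, 2 * ‖q - dirichletMean α‖ ^ 2 ∂dirichletMeasure α := by
        refine integral_mono_ae ((hLp 3).integrable_norm_pow three_ne_zero)
          (((hLp 2).integrable_norm_pow two_ne_zero).const_mul 2) (hdiam.mono fun q hq => ?_)
        dsimp only
        rw [pow_succ']
        gcongr
    _ = 2 * ((1 - ‖dirichletMean α‖ ^ 2) / (∑ i, α i + 1)) := by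
        rw [integral_const_mul, integral_norm_sub_dirichletMean_sq hα]
    _ ≤ 2 * (1 / (∑ i, α i + 1)) := by
        gcongr
        exact sub_le_self _ (sq_nonneg _)
    _ = 2 / (∑ i, α i + 1) := mul_one_div _ _

lemma abs_integral_dirichletMeasure_sub_plugin_le [DecidableEq ι] (hα : ∀ i, 0 < α i)
    {ℓ : EuclideanSpace ℝ ι → ℝ} {grad : EuclideanSpace ℝ ι → EuclideanSpace ℝ ι}
    {Hess : EuclideanSpace ℝ ι → EuclideanSpace ℝ ι →L[ℝ] EuclideanSpace ℝ ι} {G : ℝ}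
    (hgrad : ∀ q ∈ euclideanSimplex ι, HasGradientWithinAt ℓ (grad q) (euclideanSimplex ι) q)
    (hHess : ∀ q ∈ euclideanSimplex ι, HasFDerivWithinAt grad (Hess q) (euclideanSimplex ι) q)
    (hG : 0 ≤ G) (hlip : ∀ q ∈ euclideanSimplex ι,
      ‖Hess q - Hess (dirichletMean α)‖ ≤ G * ‖q - dirichletMean α‖) :
    |∫ q, ℓ q ∂dirichletMeasure α - ℓ (dirichletMean α) -
        pluginCorrection (Hess (dirichletMean α)) (dirichletMean α) / (∑ i, α i + 1)| ≤
      G / (3 * (∑ i, α i + 1)) := by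
  have := isProbabilityMeasure_dirichletMeasure hα
  have hstar : StarConvex ℝ (dirichletMean α) (euclideanSimplex ι) :=
    convex_euclideanSimplex.starConvex (dirichletMean_mem_euclideanSimplex hα)
  have hcont : ContinuousOn ℓ (euclideanSimplex ι) :=
    fun q hq => (hgrad q hq).continuousWithinAt
  rw [← half_integral_inner_map_sub_dirichletMean hα]
  calc _ ≤ G / 6 * ∫ q, ‖q - dirichletMean α‖ ^ 3 ∂dirichletMeasure α :=
        abs_integral_comp_sub_taylor_two_le hstar hgrad hHess hlip
          (memLp_id_dirichletMeasure hα 3) (dirichletMeasure_ae_mem_euclideanSimplex hα)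
          (integral_id_dirichletMeasure hα)
          (aestronglyMeasurable_dirichletMeasure_of_continuousOn hα hcont)
    _ ≤ G / 6 * (2 / (∑ i, α i + 1)) := by
        gcongr
        exact integral_norm_sub_dirichletMean_pow_three_le hα
    _ = G / (3 * (∑ i, α i + 1)) := by
        have hα₀ : 0 < ∑ i, α i := Finset.sum_pos (fun i _ => hα i) Finset.univ_nonempty
        field_simp
        ring

theorem dirichlet_expected_loss_plugin_expansion_general [DecidableEq ι]
    {Ω : Type*} [MeasurableSpace Ω] {μ : Measure Ω} {X : Ω → EuclideanSpace ℝ ι}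
    (hα : ∀ i, 0 < α i) (hX : HasLaw X (dirichletMeasure α) μ)
    {ℓ : EuclideanSpace ℝ ι → ℝ} {grad : EuclideanSpace ℝ ι → EuclideanSpace ℝ ι}
    {Hess : EuclideanSpace ℝ ι → EuclideanSpace ℝ ι →L[ℝ] EuclideanSpace ℝ ι}
    (hgrad : ∀ q ∈ euclideanSimplex ι, HasGradientWithinAt ℓ (grad q) (euclideanSimplex ι) q)
    (hHess : ∀ q ∈ euclideanSimplex ι, HasFDerivWithinAt grad (Hess q) (euclideanSimplex ι) q)
    {M G : ℝ} (hM : ‖Hess (dirichletMean α)‖ ≤ M) (hG : 0 ≤ G)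
    (hlip : ∀ q ∈ euclideanSimplex ι,
      ‖Hess q - Hess (dirichletMean α)‖ ≤ G * ‖q - dirichletMean α‖) :
    |pluginCorrection (Hess (dirichletMean α)) (dirichletMean α)| ≤
        1 / 2 * (1 - 1 / (Fintype.card ι : ℝ)) * M ∧
      |(∫ ω, ℓ (X ω) ∂μ) - ℓ (dirichletMean α) -
          pluginCorrection (Hess (dirichletMean α)) (dirichletMean α) / (∑ i, α i + 1)| ≤
        G / (3 * (∑ i, α i + 1)) ∧
      |(∫ ω, ℓ (X ω) ∂μ) - ℓ (dirichletMean α)| ≤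
        (1 / 2 * (1 - 1 / (Fintype.card ι : ℝ)) * M + G / 3) / (∑ i, α i + 1) := by
  have hα₀ : 0 < ∑ i, α i := Finset.sum_pos (fun i _ => hα i) Finset.univ_nonempty
  have hcard : 1 / (Fintype.card ι : ℝ) ≤ 1 :=
    div_le_one_of_le₀ (by exact_mod_cast Fintype.card_pos) (by positivity)
  have hmeas : AEStronglyMeasurable ℓ (dirichletMeasure α) :=
    aestronglyMeasurable_dirichletMeasure_of_continuousOn hα
      fun q hq => (hgrad q hq).continuousWithinAt
  have hint : ∫ ω, ℓ (X ω) ∂μ = ∫ q, ℓ q ∂dirichletMeasure α := hX.integral_comp hmeas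
  have hcorr : |pluginCorrection (Hess (dirichletMean α)) (dirichletMean α)| ≤
      1 / 2 * (1 - 1 / (Fintype.card ι : ℝ)) * M :=
    (abs_pluginCorrection_dirichletMean_le hα _).trans <|
      mul_le_mul_of_nonneg_left hM (by linarith)
  have hrem := abs_integral_dirichletMeasure_sub_plugin_le hα hgrad hHess hG hlip
  rw [← hint] at hrem
  refine ⟨hcorr, hrem, ?_⟩
  set L := pluginCorrection (Hess (dirichletMean α)) (dirichletMean α)
  calc |∫ ω, ℓ (X ω) ∂μ - ℓ (dirichletMean α)|
      ≤ |∫ ω, ℓ (X ω) ∂μ - ℓ (dirichletMean α) - L / (∑ i, α i + 1)| + |L / (∑ i, α i + 1)| := by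
        simpa using abs_add_le (∫ ω, ℓ (X ω) ∂μ - ℓ (dirichletMean α) - L / (∑ i, α i + 1))
          (L / (∑ i, α i + 1))
    _ ≤ G / (3 * (∑ i, α i + 1)) +
          1 / 2 * (1 - 1 / (Fintype.card ι : ℝ)) * M / (∑ i, α i + 1) := by
        rw [abs_div, abs_of_pos (a := ∑ i, α i + 1) (by positivity)]
        gcongr
    _ = _ := by field_simp; ring

end Dirichlet

/-- **Explicit expansion of Dirichlet-expected losses (plug-in approximation).**
Let `ℓ : ℝ^K → ℝ` be twice continuously differentiable on an open convex
neighborhood `U` of the probability simplex, with gradient `grad` and Hessian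
`Hess` (viewed at each point as a linear map `ℝ^K → ℝ^K`), where the Hessian
has operator norm at most `M` on `U` and is `G`-Lipschitz in operator norm on
`U`.  Let `π` be a Dirichlet(α) random vector realized as `π_i = W_i / Σ_j W_j`
with `W_i` independent Gamma(α_i, 1) random variables, `α₀ = Σ_j α_j`,
`p = α/α₀`, and `L₁(p) = ½ tr(Hess(p)(Diag(p) − p pᵀ))` (written via matrix
entries `Hess(p)_{ij} = (Hess(p) e_j)_i`).  Then
`𝔼[ℓ(π)] = ℓ(p) + L₁(p)/(α₀ + 1) + R(α)` with
`|L₁(p)| ≤ ½(1 − 1/K)M` and `|R(α)| ≤ G/(3(α₀ + 1))`; in particular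
`|𝔼[ℓ(π)] − ℓ(p)| ≤ (½(1 − 1/K)M + G/3)/(α₀ + 1)`, i.e. the Dirichlet-expected
loss equals the plug-in loss `ℓ(p)` up to an `O((α₀ + 1)⁻¹)` error. -/
theorem dirichlet_expected_loss_plugin_expansion {K : ℕ} (hK : 0 < K)
    {Ω : Type*} [MeasurableSpace Ω] (μ : Measure Ω) [IsProbabilityMeasure μ]
    (U : Set (EuclideanSpace ℝ (Fin K))) (hUopen : IsOpen U) (hUconv : Convex ℝ U)
    (hUsimplex : probSimplex K ⊆ U)
    (ℓ : EuclideanSpace ℝ (Fin K) → ℝ)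
    (grad : EuclideanSpace ℝ (Fin K) → EuclideanSpace ℝ (Fin K))
    (Hess : EuclideanSpace ℝ (Fin K) →
      EuclideanSpace ℝ (Fin K) →L[ℝ] EuclideanSpace ℝ (Fin K))
    (hℓ : ContDiffOn ℝ 2 ℓ U)
    (hgrad : ∀ x ∈ U, HasGradientAt ℓ (grad x) x)
    (hhess : ∀ x ∈ U, HasFDerivAt grad (Hess x) x)
    (M : ℝ) (hM : 0 ≤ M) (hbound : ∀ q ∈ U, ‖Hess q‖ ≤ M)
    (G : ℝ) (hG : 0 ≤ G)
    (hlip : ∀ u ∈ U, ∀ v ∈ U, ‖Hess u - Hess v‖ ≤ G * ‖u - v‖)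
    (α : Fin K → ℝ) (hα : ∀ i, 0 < α i)
    (W : Fin K → Ω → ℝ) (hWmeas : ∀ i, Measurable (W i))
    (hWindep : iIndepFun W μ)
    (hWlaw : ∀ i, μ.map (W i) = gammaMeasure (α i) 1)
    (π : Ω → EuclideanSpace ℝ (Fin K))
    (hπ : ∀ ω i, π ω i = W i ω / ∑ j, W j ω)
    (α₀ : ℝ) (hα₀ : α₀ = ∑ j, α j)
    (p : EuclideanSpace ℝ (Fin K)) (hp : ∀ i, p i = α i / α₀)
    (L1 : ℝ)
    (hL1 : L1 = (1 / 2) * ∑ i, ∑ j,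
      Hess p (EuclideanSpace.single j 1) i * ((if j = i then p j else 0) - p j * p i))
    (R : ℝ) (hR : R = (∫ ω, ℓ (π ω) ∂μ) - ℓ p - L1 / (α₀ + 1)) :
    (∫ ω, ℓ (π ω) ∂μ) = ℓ p + L1 / (α₀ + 1) + R ∧
      |L1| ≤ (1 / 2) * (1 - 1 / (K : ℝ)) * M ∧
      |R| ≤ G / (3 * (α₀ + 1)) ∧
      |(∫ ω, ℓ (π ω) ∂μ) - ℓ p| ≤
        ((1 / 2) * (1 - 1 / (K : ℝ)) * M + G / 3) / (α₀ + 1) := by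
  have : NeZero K := ⟨hK.ne'⟩
  subst hα₀ hL1 hR
  obtain rfl : p = dirichletMean α := by ext i; exact hp i
  obtain rfl : π = fun ω => WithLp.toLp 2 fun i => W i ω / ∑ j, W j ω := by ext ω i; exact hπ ω i
  have hmem : euclideanSimplex (Fin K) ⊆ U := hUsimplex
  have hlaw := hasLaw_dirichletMeasure_of_iIndepFun
    (fun i => ⟨(hWmeas i).aemeasurable, hWlaw i⟩) hWindep
  have hmean := hmem (dirichletMean_mem_euclideanSimplex hα)
  have hmain := dirichlet_expected_loss_plugin_expansion_general hα hlaw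
    (fun q hq => (hgrad q (hmem hq)).hasFDerivAt.hasFDerivWithinAt)
    (fun q hq => (hhess q (hmem hq)).hasFDerivWithinAt) (hbound _ hmean) hG
    (fun q hq => hlip q (hmem hq) _ hmean)
  rw [Fintype.card_fin] at hmain
  exact ⟨by ring, hmain⟩
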